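/- arXiv:2307.01912 — 3 statements merged into one kernel-verified Lean document; each statement's English description precedes it below -/
import Mathlib

section
/- Let n be a natural number and let a, b be natural numbers with a ≥ b. Then the determinant of the n×n rational matrix D_n(a,b) whose (i,j)-entry (for 0 ≤ i, j ≤ n-1) is C(2i+2a, i-j+a-b) − C(2i+2a, i-j+a-b-1) equals ∏_{i=1}^{n} ∏_{j=1}^{a-b} ((a+b+i-j)(a+b+2i+j-2)) / ((a+b+2i-j)(i+j-1)). -/
/-- `C N k` : the binomial coefficient `C(N,k)` for `N : ℕ` and `k : ℤ`,
with the convention that it is `0` when `k < 0` or `k > N`, as a rational. -/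
def C (N : ℕ) (k : ℤ) : ℚ := if 0 ≤ k then (N.choose k.toNat : ℚ) else 0

/-!
The entry of the matrix in row `i` and column `j` is the ballot number `B(N, M)` with `N = a + i`
and `M = b + j`. Since `(t - M) (t + M + 1) = t (t + 1) - M (M + 1)`, these numbers satisfy
`B(N, M) / (2N)! = B(N + 1, M) / (2N + 2)! * ((N + 1) (N + 2) - M (M + 1))`. Comparing every row
with `L = a + n - 1`, the entry becomes `(2N)!` times the column factor `B(L, M) / (2L)!` times a
monic polynomial of degree `n - 1 - i` in `-M (M + 1)`. The determinant is therefore a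
Vandermonde determinant in the numbers `M (M + 1)`, up to row and column factors.
-/

open Finset Matrix
open scoped Nat

section Products

theorem prod_Icc_one_eq_prod_range {M : Type*} [CommMonoid M] (f : ℕ → M) (n : ℕ) :
    ∏ i ∈ Icc 1 n, f i = ∏ i ∈ range n, f (i + 1) := by
  rw [range_eq_Ico, prod_Ico_add', ← Ico_add_one_right_eq_Icc, zero_add]

theorem prod_range_mul_prod_range_add {M : Type*} [CommMonoid M] (f : ℕ → M) (n : ℕ) :
    (∏ i ∈ range n, f i) * ∏ i ∈ range n, f (n + i) =
      ∏ i ∈ range n, f (2 * i) * f (2 * i + 1) := by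
  rw [← prod_range_add, ← two_mul]
  induction n with
  | zero => simp
  | succ n ih =>
    rw [show 2 * (n + 1) = 2 * n + 1 + 1 by ring, prod_range_succ, prod_range_succ, ih,
      prod_range_succ, mul_assoc]

variable {K : Type*} [Field K] [CharZero K]

theorem prod_range_natCast_add_add_one (x m : ℕ) :
    ∏ i ∈ range m, ((x : K) + i + 1) = (x + m)! / x ! := by
  rw [eq_div_iff (mod_cast x.factorial_ne_zero), mul_comm]
  have h := Nat.factorial_mul_ascFactorial x m
  rw [Nat.ascFactorial_eq_prod_range] at h
  rw [← h]
  push_cast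
  simp only [add_right_comm]

theorem prod_range_natCast_add_sub (x m : ℕ) :
    ∏ i ∈ range m, ((x : K) + m - i) = (x + m)! / x ! := by
  rw [← prod_range_natCast_add_add_one, ← prod_range_reflect]
  refine prod_congr rfl fun i hi => ?_
  obtain ⟨d, rfl⟩ := Nat.exists_eq_add_of_lt (mem_range.mp hi)
  rw [show i + d + 1 - 1 - i = d by omega]
  push_cast
  ring

end Products

section Vandermonde

variable {R : Type*} [CommRing R]

theorem det_vandermonde_natCast (u : ℕ → R) (n : ℕ) :
    (vandermonde fun i : Fin n => u i).det = ∏ j ∈ range n, ∏ i ∈ range j, (u j - u i) := by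
  rw [det_vandermonde, prod_comm' (s' := Iio) (t' := univ) (by simp),
    ← Fin.prod_univ_eq_prod_range fun j => ∏ i ∈ range j, (u j - u i)]
  refine prod_congr rfl fun j _ => ?_
  rw [← Nat.Iio_eq_range, ← Fin.map_valEmbedding_Iio, prod_map]
  rfl

theorem det_prod_sub_eq_det_vandermonde {n : ℕ} {ι : Type*} (c : ι → R) (x : Fin n → R)
    (s : Fin n → Finset ι) (hs : ∀ i, #(s i) = i.rev) :
    (of fun i j => ∏ t ∈ s i, (c t - x j)).det = (vandermonde x).det := by
  -- Reversing the rows makes the degrees increase; the resulting sign is absorbed by the projective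
  -- Vandermonde matrix, in which the exponents of `-x` decrease.
  nontriviality R
  let p (j : Fin n) : Polynomial R := ∏ t ∈ s j.rev, (Polynomial.X + Polynomial.C (c t))
  have hmonic (j : Fin n) : (p j).Monic :=
    Polynomial.monic_prod_of_monic _ _ fun t _ => Polynomial.monic_X_add_C (c t)
  have hdegree (j : Fin n) : (p j).natDegree = j := by
    rw [Polynomial.natDegree_prod_of_monic _ _ fun t _ => Polynomial.monic_X_add_C (c t)]
    simp [hs]
  calc (of fun i j => ∏ t ∈ s i, (c t - x j)).det
      = ((of fun i j => (p j).eval (-x i)).submatrix id Fin.revPerm).det := by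
        rw [← det_transpose]
        congr 1 with i j
        simp [p, Polynomial.eval_prod, neg_add_eq_sub]
    _ = ((vandermonde (-x)).submatrix id Fin.revPerm).det := by
        rw [det_permute', det_permute',
          det_eval_matrixOfPolynomials_eq_det_vandermonde (-x) p hdegree hmonic]
        rfl
    _ = (projVandermonde 1 (-x)).det := by
        congr 1 with i j
        simp [projVandermonde_apply]
    _ = (vandermonde x).det := by
        simp [det_projVandermonde, det_vandermonde, neg_add_eq_sub]

end Vandermonde

/-- The ballot number counting the `±1`-paths of length `2 * N` that start at height `0`, stay
nonnegative and end at height `2 * M`, in the form given by the reflection principle. The entries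
of the matrix are of this form. -/
def ballot (N M : ℕ) : ℚ := C (2 * N) ((N : ℤ) - M) - C (2 * N) ((N : ℤ) - M - 1)

theorem C_natCast (N k : ℕ) : C N k = N.choose k := by
  simp [C]

theorem C_of_neg (N : ℕ) {k : ℤ} (hk : k < 0) : C N k = 0 :=
  if_neg hk.not_ge

theorem ballot_of_lt {N M : ℕ} (h : N < M) : ballot N M = 0 := by
  rw [ballot, C_of_neg _ (by omega), C_of_neg _ (by omega), sub_zero]

theorem ballot_add_left (M d : ℕ) :
    ballot (M + d) M = (2 * (M + d))! * (2 * M + 1) / (d ! * (2 * M + d + 1)!) := by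
  have hM : ((M + d : ℕ) : ℤ) - M = d := by push_cast; ring
  rw [ballot, hM]
  cases d with
  | zero =>
    rw [C_natCast, C_of_neg _ (by simp), Nat.choose_zero_right, add_zero, add_zero,
      Nat.factorial_succ]
    push_cast
    field_simp
    simp
  | succ e =>
    rw [show ((e + 1 : ℕ) : ℤ) - 1 = e by push_cast; ring, C_natCast, C_natCast]
    have h₁ : ((2 * (M + (e + 1))).choose (e + 1) : ℚ) =
        (2 * (M + (e + 1)))! / ((e + 1)! * (2 * M + e + 1)!) := by
      rw [show 2 * (M + (e + 1)) = e + 1 + (2 * M + e + 1) by ring, Nat.cast_add_choose]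
    have h₂ : ((2 * (M + (e + 1))).choose e : ℚ) =
        (2 * (M + (e + 1)))! / (e ! * (2 * M + e + 2)!) := by
      rw [show 2 * (M + (e + 1)) = e + (2 * M + e + 2) by ring, Nat.cast_add_choose]
    rw [h₁, h₂, ← add_assoc (2 * M), Nat.factorial_succ e, Nat.factorial_succ (2 * M + e + 1)]
    push_cast
    field_simp
    ring

theorem ballot_div_factorial_succ (N M : ℕ) :
    ballot N M / (2 * N)! =
      ballot (N + 1) M / (2 * (N + 1))! * (((N : ℚ) + 1) * (N + 2) - M * (M + 1)) := by
  rcases le_or_gt M N with hMN | hNM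
  · obtain ⟨d, rfl⟩ := Nat.exists_eq_add_of_le hMN
    rw [add_assoc, ballot_add_left, ballot_add_left, ← add_assoc (2 * M), Nat.factorial_succ d,
      Nat.factorial_succ (2 * M + d + 1)]
    push_cast
    field_simp
    ring
  · rw [ballot_of_lt hNM, zero_div, zero_eq_mul]
    rcases (Nat.succ_le_of_lt hNM).lt_or_eq with h | rfl
    · exact .inl (by rw [ballot_of_lt h, zero_div])
    · exact .inr (by push_cast; ring)

theorem ballot_eq_mul_prod_Ioc {N L : ℕ} (h : N ≤ L) (M : ℕ) :
    ballot N M = (2 * N)! *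
      (ballot L M / (2 * L)! * ∏ t ∈ Ioc N L, ((t : ℚ) * (t + 1) - M * (M + 1))) := by
  rw [mul_comm, ← div_eq_iff (mod_cast (2 * N).factorial_ne_zero)]
  induction L, h using Nat.le_induction with
  | base => simp
  | succ L h ih =>
    rw [ih, ballot_div_factorial_succ, prod_Ioc_succ_top h]
    push_cast
    ring

theorem det_ballot {n : ℕ} (a : ℕ) (M : Fin n → ℕ) :
    (of fun i j : Fin n => ballot (a + i) (M j)).det =
      (∏ i ∈ range n, ((2 * (a + i))! : ℚ)) *
        ((∏ j, ballot (a + n - 1) (M j) / (2 * (a + n - 1))!) *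
          (vandermonde fun j => (M j : ℚ) * (M j + 1)).det) := by
  rw [← det_prod_sub_eq_det_vandermonde (fun t : ℕ => (t : ℚ) * (t + 1)) _
    (fun i : Fin n => Ioc (a + i) (a + n - 1))
    (fun i => by rw [Nat.card_Ioc, Fin.val_rev]; omega),
    ← Fin.prod_univ_eq_prod_range fun i => ((2 * (a + i))! : ℚ), ← det_mul_row, ← det_mul_column]
  congr 1 with i j
  exact ballot_eq_mul_prod_Ioc (by omega) _

theorem det_vandermonde_mul_add_one (b n : ℕ) :
    (vandermonde fun j : Fin n => ((b + j : ℕ) : ℚ) * ((b + j : ℕ) + 1)).det =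
      ∏ j ∈ range n, (j ! : ℚ) * (2 * j + 2 * b)! / (j + 2 * b)! := by
  rw [det_vandermonde_natCast fun j => ((b + j : ℕ) : ℚ) * ((b + j : ℕ) + 1)]
  refine prod_congr rfl fun j _ => ?_
  have hfactor (i : ℕ) : ((b + j : ℕ) : ℚ) * ((b + j : ℕ) + 1) - (b + i : ℕ) * ((b + i : ℕ) + 1) =
      ((0 : ℕ) + j - i) * ((j + 2 * b : ℕ) + i + 1) := by
    push_cast
    ring
  simp only [hfactor]
  rw [prod_mul_distrib, prod_range_natCast_add_sub, prod_range_natCast_add_add_one,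
    Nat.factorial_zero, Nat.cast_one, div_one, zero_add, mul_div_assoc,
    show j + 2 * b + j = 2 * j + 2 * b by ring]

theorem prod_ballot_div_factorial (b m n : ℕ) :
    ∏ j : Fin n, ballot (b + m + n - 1) (b + j) / (2 * (b + m + n - 1))! =
      ∏ j ∈ range n, (2 * j + 2 * b + 1 : ℚ) * (j + 2 * b + m)! /
        ((j + m)! * (2 * j + 2 * b + m)! * (2 * j + 2 * b + m + 1)!) := by
  have hcolumn (j : Fin n) : ballot (b + m + n - 1) (b + j) / (2 * (b + m + n - 1))! =
      (2 * j + 2 * b + 1 : ℚ) / ((m + (n - 1 - j))! * (2 * b + m + (n + j))!) := by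
    obtain ⟨d, hd⟩ : ∃ d, n = j + d + 1 := Nat.exists_eq_add_of_lt j.isLt
    rw [show b + m + n - 1 = b + j + (m + d) by omega, ballot_add_left,
      show n - 1 - (j : ℕ) = d by omega,
      show 2 * (b + j) + (m + d) + 1 = 2 * b + m + (n + j) by omega]
    push_cast
    field_simp
    ring
  have hfactorial : ∏ j ∈ range n, ((2 * b + m + (n + j))! : ℚ) =
      (∏ j ∈ range n, ((2 * b + m + 2 * j)! * (2 * b + m + (2 * j + 1))! : ℚ)) /
        ∏ j ∈ range n, ((2 * b + m + j)! : ℚ) := by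
    rw [eq_div_iff (prod_ne_zero_iff.mpr fun j _ => mod_cast (2 * b + m + j).factorial_ne_zero),
      mul_comm, prod_range_mul_prod_range_add fun j => ((2 * b + m + j)! : ℚ)]
  simp only [hcolumn]
  rw [Fin.prod_univ_eq_prod_range fun j =>
      (2 * j + 2 * b + 1 : ℚ) / ((m + (n - 1 - j))! * (2 * b + m + (n + j))!),
    prod_div_distrib, prod_mul_distrib, prod_range_reflect fun j => ((m + j)! : ℚ),
    hfactorial, ← prod_div_distrib, ← prod_mul_distrib, ← prod_div_distrib]
  refine prod_congr rfl fun j _ => ?_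
  rw [add_comm m j, ← add_assoc (2 * b + m) (2 * j) 1,
    show 2 * b + m + 2 * j = 2 * j + 2 * b + m by ring,
    show 2 * b + m + j = j + 2 * b + m by ring]
  field_simp

theorem det_ballot_add (b m n : ℕ) :
    (of fun i j : Fin n => ballot (b + m + i) (b + j)).det =
      ∏ k ∈ range n, ((2 * k + 2 * (b + m))! * (2 * k + 2 * b + 1 : ℚ) * k ! *
        (2 * k + 2 * b)! * (k + 2 * b + m)!) /
          ((k + 2 * b)! * (k + m)! * (2 * k + 2 * b + m)! * (2 * k + 2 * b + m + 1)!) := by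
  rw [det_ballot, det_vandermonde_mul_add_one, prod_ballot_div_factorial, ← prod_mul_distrib,
    ← prod_mul_distrib]
  refine prod_congr rfl fun k _ => ?_
  rw [show 2 * (b + m + k) = 2 * k + 2 * (b + m) by ring]
  field_simp

theorem prod_Icc_eq_factorial_div (b m k : ℕ) :
    ∏ j ∈ Icc 1 m,
      (((b + m : ℕ) : ℚ) + b + (k + 1 : ℕ) - j) * ((b + m : ℕ) + b + 2 * (k + 1 : ℕ) + j - 2) /
      (((b + m : ℕ) + b + 2 * (k + 1 : ℕ) - j) * ((k + 1 : ℕ) + j - 1)) =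
    ((2 * k + 2 * (b + m))! * (2 * k + 2 * b + 1 : ℚ) * k ! *
        (2 * k + 2 * b)! * (k + 2 * b + m)!) /
          ((k + 2 * b)! * (k + m)! * (2 * k + 2 * b + m)! * (2 * k + 2 * b + m + 1)!) := by
  have hfactor (j : ℕ) :
      (((b + m : ℕ) : ℚ) + b + (k + 1 : ℕ) - (j + 1 : ℕ)) *
        ((b + m : ℕ) + b + 2 * (k + 1 : ℕ) + (j + 1 : ℕ) - 2) /
      (((b + m : ℕ) + b + 2 * (k + 1 : ℕ) - (j + 1 : ℕ)) * ((k + 1 : ℕ) + (j + 1 : ℕ) - 1)) =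
      ((k + 2 * b : ℕ) + m - j) * ((2 * k + 2 * b + m : ℕ) + j + 1) /
        (((2 * k + 2 * b + 1 : ℕ) + m - j) * (k + j + 1)) := by
    push_cast
    ring_nf
  rw [prod_Icc_one_eq_prod_range]
  simp only [hfactor]
  rw [prod_div_distrib, prod_mul_distrib, prod_mul_distrib, prod_range_natCast_add_sub,
    prod_range_natCast_add_sub, prod_range_natCast_add_add_one, prod_range_natCast_add_add_one,
    show 2 * k + 2 * b + m + m = 2 * k + 2 * (b + m) by ring,
    add_right_comm (2 * k + 2 * b) 1 m, Nat.factorial_succ (2 * k + 2 * b)]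
  push_cast
  field_simp

theorem det_D_eq (n a b : ℕ) (hab : b ≤ a) :
    Matrix.det (Matrix.of fun i j : Fin n =>
      C (2 * (i : ℕ) + 2 * a) ((i : ℤ) - (j : ℤ) + a - b) -
      C (2 * (i : ℕ) + 2 * a) ((i : ℤ) - (j : ℤ) + a - b - 1)) =
    ∏ i ∈ Finset.Icc 1 n, ∏ j ∈ Finset.Icc 1 (a - b),
      (((a : ℚ) + b + i - j) * ((a : ℚ) + b + 2 * i + j - 2)) /
      ((((a : ℚ) + b + 2 * i - j)) * ((i : ℚ) + j - 1)) := by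
  obtain ⟨m, rfl⟩ := Nat.exists_eq_add_of_le hab
  have hentry (i j : Fin n) :
      C (2 * (i : ℕ) + 2 * (b + m)) ((i : ℤ) - (j : ℤ) + (b + m : ℕ) - b) -
        C (2 * (i : ℕ) + 2 * (b + m)) ((i : ℤ) - (j : ℤ) + (b + m : ℕ) - b - 1) =
      ballot (b + m + i) (b + j) := by
    rw [ballot, show 2 * (b + m + (i : ℕ)) = 2 * i + 2 * (b + m) by ring,
      show ((b + m + i : ℕ) : ℤ) - (b + j : ℕ) = (i : ℤ) - j + (b + m : ℕ) - b by
        push_cast; ring]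
  simp only [hentry]
  rw [det_ballot_add, Nat.add_sub_cancel_left, prod_Icc_one_eq_prod_range]
  exact prod_congr rfl fun k _ => (prod_Icc_eq_factorial_div b m k).symm
end

section
/- Let a, b, c be natural numbers. Then the determinant of the c×c rational matrix whose (i,j)-entry (for 0 ≤ i, j ≤ c-1) is C(a+b, a−i+j) equals ∏_{i=0}^{a-1} ∏_{j=0}^{b-1} ∏_{k=0}^{c-1} (i+j+k+2) / (i+j+k+1). -/
/-! Multiplying on the right by the unipotent matrix of binomial coefficients `C(j, k)` turns the
entry `C(a + b, a - i + j)` into `C(a + b + j, a - i + j)`, by Vandermonde's convolution. With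
`n = a + j` this is `C(n + b, n - i)`, which splits into a factor depending only on `j`, a factor
depending only on `i`, and the falling factorial `n (n - 1) ⋯ (n - i + 1)`. The latter is a monic
polynomial of degree `i` in `n`, so what remains is a Vandermonde determinant at consecutive
integers. On the other side, the product over the box telescopes in `i` and `j`. -/

section

open Finset Matrix
open scoped Nat

theorem C_of_neg_s8 (N : ℕ) {z : ℤ} (hz : z < 0) : C N z = 0 :=
  if_neg hz.not_ge

theorem C_succ_add_one (N : ℕ) (z : ℤ) : C (N + 1) (z + 1) = C N z + C N (z + 1) := by
  rcases lt_trichotomy z (-1) with hz | rfl | hz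
  · rw [C_of_neg_s8 _ (by lia), C_of_neg_s8 _ (by lia), C_of_neg_s8 _ (by lia), add_zero]
  · simp [C]
  · lift z to ℕ using by lia
    rw [← Nat.cast_add_one, C_natCast, C_natCast, C_natCast, Nat.choose_succ_succ, Nat.cast_add]

theorem sum_choose_mul_C (N j : ℕ) (z : ℤ) :
    ∑ k ∈ range (j + 1), (j.choose k : ℚ) * C N (z + k) = C (N + j) (z + j) := by
  induction j generalizing z with
  | zero => simp
  | succ j ih =>
    calc ∑ k ∈ range (j + 2), ((j + 1).choose k : ℚ) * C N (z + k)
        = ∑ k ∈ range (j + 1), (j.choose k : ℚ) * C N (z + k) +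
            ∑ k ∈ range (j + 1), (j.choose k : ℚ) * C N (z + (k + 1 : ℕ)) :=
          sum_choose_succ_mul (fun k _ => C N (z + k)) j
      _ = C (N + j) (z + j) + C (N + j) (z + j + 1) := by
          rw [ih, add_right_comm z, ← ih (z + 1)]
          simp only [Nat.cast_add_one, add_assoc, add_comm (1 : ℤ)]
      _ = C (N + (j + 1)) (z + (j + 1 : ℕ)) := by
          rw [← C_succ_add_one, Nat.cast_add_one, add_assoc z, add_assoc N]

theorem C_add_natCast_sub (n b i : ℕ) :
    C (n + b) (n - i) = ((n + b)! / n ! : ℚ) * (((b + i)! : ℚ)⁻¹ * n.descFactorial i) := by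
  rcases lt_or_ge n i with h | h
  · rw [C_of_neg_s8 _ (by lia), Nat.descFactorial_of_lt h]
    simp
  · obtain ⟨m, rfl⟩ := Nat.exists_eq_add_of_le' h
    have hdesc : ((m + i)! : ℚ) = m ! * (m + i).descFactorial i := by
      exact_mod_cast (m.add_sub_cancel (m := i) ▸ Nat.factorial_mul_descFactorial h).symm
    have hdesc_ne : ((m + i).descFactorial i : ℚ) ≠ 0 := by
      exact_mod_cast (Nat.descFactorial_pos.2 h).ne'
    rw [Nat.cast_add, add_sub_cancel_right, C_natCast, add_right_comm m, add_assoc m b,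
      Nat.cast_add_choose, hdesc]
    field_simp

theorem det_choose_eq_one (R : Type*) [CommRing R] (c : ℕ) :
    det (of fun k j : Fin c => ((j : ℕ).choose k : R)) = 1 := by
  rw [det_of_isUpperTriangular fun k j hjk => by
    simp [Nat.choose_eq_zero_of_lt (show (j : ℕ) < k from hjk)]]
  simp

theorem det_C_eq_det_C_add_col {c : ℕ} (N : Fin c → ℕ) (z : Fin c → ℤ) :
    det (of fun i j : Fin c => C (N i) (z i + j)) =
      det (of fun i j : Fin c => C (N i + j) (z i + j)) := by
  rw [← mul_one (det _), ← det_choose_eq_one ℚ c, ← det_mul]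
  congr 1
  ext i j
  calc ∑ k : Fin c, C (N i) (z i + k) * (j : ℕ).choose k
      = ∑ k ∈ range c, ((j : ℕ).choose k : ℚ) * C (N i) (z i + k) := by
        simp only [mul_comm (C _ _), sum_range]
    _ = ∑ k ∈ range (j + 1), ((j : ℕ).choose k : ℚ) * C (N i) (z i + k) :=
        (sum_subset (range_mono j.2) fun k _ hk => by
          rw [Nat.choose_eq_zero_of_lt (by simpa using hk), Nat.cast_zero, zero_mul]).symm
    _ = C (N i + j) (z i + j) := sum_choose_mul_C _ _ _

theorem det_descFactorial_eq_det_vandermonde (R : Type*) [CommRing R] [IsDomain R] {c : ℕ}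
    (n : Fin c → ℕ) :
    det (of fun i j : Fin c => ((n j).descFactorial i : R)) =
      det (vandermonde fun j => (n j : R)) := by
  rw [det_eval_matrixOfPolynomials_eq_det_vandermonde _ (fun i : Fin c => descPochhammer R i)
    (fun i => descPochhammer_natDegree R i) (fun i => monic_descPochhammer R i), ← det_transpose]
  simp only [descPochhammer_eval_eq_descFactorial]
  rfl

theorem det_vandermonde_add_natCast (R : Type*) [CommRing R] (a c : ℕ) :
    det (vandermonde fun j : Fin c => ((a + j : ℕ) : R)) = ∏ k ∈ range c, (k ! : R) := by
  simp only [Nat.cast_add, add_comm (a : R), det_vandermonde_add]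
  cases c with
  | zero => simp
  | succ c =>
    rw [det_vandermonde_id_eq_superFactorial, ← Nat.prod_range_succ_factorial, Nat.cast_prod]

theorem det_C_add_natCast_sub {c : ℕ} (b : ℕ) (n : Fin c → ℕ) :
    det (of fun i j : Fin c => C (n j + b) (n j - i)) =
      (∏ j, ((n j + b)! / (n j)! : ℚ)) *
        ((∏ i : Fin c, ((b + i)! : ℚ)⁻¹) * det (vandermonde fun j => (n j : ℚ))) := by
  rw [← det_descFactorial_eq_det_vandermonde, ← det_mul_column, ← det_mul_row]
  simp only [C_add_natCast_sub, of_apply]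

theorem prod_range_add_two_div_add_one {K : Type*} [Field K] [CharZero K] (m b : ℕ) :
    ∏ j ∈ range b, ((m + j + 2 : K) / (m + j + 1)) = (m + b + 1) / (m + 1) := by
  have hm : (m + 1 : K) ≠ 0 := m.cast_add_one_ne_zero
  refine prod_range_induction _ (fun b => (m + b + 1 : K) / (m + 1)) (by simp [hm]) b fun j _ => ?_
  have hmj : (m + j + 1 : K) ≠ 0 := by exact_mod_cast (m + j).succ_ne_zero
  push_cast
  field_simp
  ring

theorem prod_prod_range_add_two_div_add_one {K : Type*} [Field K] [CharZero K] (a b k : ℕ) :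
    ∏ i ∈ range a, ∏ j ∈ range b, ((i + j + k + 2 : K) / (i + j + k + 1)) =
      ((a + k + b)! / (a + k)!) * (((b + k)! : K)⁻¹ * k !) := by
  have hfact (n : ℕ) : (n ! : K) ≠ 0 := by exact_mod_cast n.factorial_ne_zero
  refine prod_range_induction _
    (fun a => ((a + k + b)! / (a + k)! : K) * (((b + k)! : K)⁻¹ * k !)) ?_ a fun i _ => ?_
  · have := hfact k
    have := hfact (b + k)
    simp only [zero_add, add_comm k b]
    field_simp
  · have hinner : ∏ j ∈ range b, ((i + j + k + 2 : K) / (i + j + k + 1)) =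
        (i + k + b + 1) / (i + k + 1) := by
      simpa [add_right_comm] using prod_range_add_two_div_add_one (K := K) (i + k) b
    rw [hinner, add_right_comm i 1 k, add_right_comm (i + k) 1 b, Nat.factorial_succ,
      Nat.factorial_succ]
    push_cast
    rw [mul_div_mul_comm]
    ring

theorem prod_box_add_two_div_add_one {K : Type*} [Field K] [CharZero K] (a b c : ℕ) :
    ∏ i ∈ range a, ∏ j ∈ range b, ∏ k ∈ range c, ((i + j + k + 2 : K) / (i + j + k + 1)) =
      ∏ k ∈ range c, (((a + k + b)! / (a + k)!) * (((b + k)! : K)⁻¹ * k !)) := by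
  simp only [← prod_prod_range_add_two_div_add_one, prod_comm (t := range c)]

end

theorem det_macmahon (a b c : ℕ) :
    Matrix.det (Matrix.of fun i j : Fin c =>
      C (a + b) ((a : ℤ) - (i : ℤ) + (j : ℤ))) =
    ∏ i ∈ Finset.range a, ∏ j ∈ Finset.range b, ∏ k ∈ Finset.range c,
      ((i : ℚ) + j + k + 2) / ((i : ℚ) + j + k + 1) := by
  calc Matrix.det (Matrix.of fun i j : Fin c => C (a + b) ((a : ℤ) - i + j))
      = Matrix.det (Matrix.of fun i j : Fin c => C (a + b + j) ((a : ℤ) - i + j)) :=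
        det_C_eq_det_C_add_col (fun _ => a + b) fun i => a - i
    _ = Matrix.det (Matrix.of fun i j : Fin c => C (a + j + b) ((a + j : ℕ) - (i : ℤ))) := by
        simp only [Nat.cast_add, add_right_comm a b, sub_add_eq_add_sub]
    _ = ∏ k ∈ Finset.range c, (((a + k + b).factorial / (a + k).factorial : ℚ) *
          (((b + k).factorial : ℚ)⁻¹ * k.factorial)) := by
        rw [det_C_add_natCast_sub b fun j : Fin c => a + j, det_vandermonde_add_natCast]
        simp only [Finset.prod_mul_distrib, Finset.prod_range]
    _ = _ := (prod_box_add_two_div_add_one a b c).symm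
end

section
/- Let α, β, n be natural numbers. Consider the polynomial P in ℚ[t_1, …, t_n] given by P = ∏_{i=1}^{n} (1−t_i)^{2α} (1−t_i^2)^{2β} · ∏_{1 ≤ i < j ≤ n} (t_i − t_j)^2 (1 − t_i t_j)^2. Then the coefficient in P of the monomial ∏_{i=1}^{n} t_i^{α+2β+2n−2} equals (−1)^{n(α+β)} · ∏_{i=1}^{n} ((2β+2i−2)!·(2α+2β+2i−2)!·i!) / ((β+i−1)!·(α+β+i−1)!·(α+2β+n+i−2)!). -/
open MvPolynomial

/-!
Put `x = -(1 - t)²` and `y = (1 + t)²`, so that `x + y = 4t`. Then `xⱼtᵢ - xᵢtⱼ` equals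
`-(tᵢ - tⱼ)(1 - tᵢtⱼ)` and `xⱼyᵢ - xᵢyⱼ` equals four times that, so the double product is, up to a
power of `4`, the product of the Vandermonde determinants of the bases `xᵏyⁿ⁻¹⁻ᵏ` and `xˡtⁿ⁻¹⁻ˡ`.
Andréief's identity turns the coefficient into `n!` times a determinant whose entries are
middle coefficients of `xᵖy^q`, i.e. super Catalan numbers (von Szily's identity). Mixing these two
bases makes `p + q` independent of `k` and `q` independent of `l`; once the corresponding factors
are taken out, the entries are monic polynomials of degree `l` in `4k`, and an ordinary Vandermonde
determinant remains.
-/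

open scoped Nat Polynomial

section Andreief

variable {ι R : Type*} [Fintype ι]

theorem coeff_prod_toMvPolynomial [CommSemiring R] (p : ι → R[X]) (d : ι →₀ ℕ) :
    coeff d (∏ i, (p i).toMvPolynomial i) = ∏ i, (p i).coeff (d i) := by
  classical
  have expand (i : ι) : (p i).toMvPolynomial i =
      ∑ k ∈ (p i).support, monomial (Finsupp.single i k) ((p i).coeff k) := by
    conv_lhs => rw [(p i).as_sum_support_C_mul_X_pow]
    simp [C_mul_X_pow_eq_monomial]
  have prod_monomial (e : ι → ℕ) :
      ∏ i, monomial (Finsupp.single i (e i)) ((p i).coeff (e i)) =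
        monomial (Finsupp.equivFunOnFinite.symm e) (∏ i, (p i).coeff (e i)) := by
    rw [← monomial_sum_prod]
    congr 1
    exact congrArg monomial (Finsupp.univ_sum_single (Finsupp.equivFunOnFinite.symm e))
  simp_rw [expand, Finset.prod_univ_sum, coeff_sum, prod_monomial, coeff_monomial,
    Equiv.symm_apply_eq]
  rw [Finset.sum_ite_eq']
  split_ifs with hd
  · rfl
  · obtain ⟨i, hi⟩ : ∃ i, (p i).coeff (d i) = 0 := by
      simpa [Fintype.mem_piFinset] using hd
    exact (Finset.prod_eq_zero (Finset.mem_univ i) hi).symm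

variable [DecidableEq ι] [CommRing R]

theorem coeff_det_toMvPolynomial (p : Matrix ι ι R[X]) (d : ι →₀ ℕ) :
    coeff d (Matrix.of fun i j => (p i j).toMvPolynomial i).det =
      (Matrix.of fun i j => (p i j).coeff (d i)).det := by
  rw [← Matrix.det_transpose, ← Matrix.det_transpose (Matrix.of _), Matrix.det_apply,
    Matrix.det_apply, coeff_sum]
  refine Finset.sum_congr rfl fun σ _ => ?_
  simp only [Matrix.transpose_apply, Matrix.of_apply]
  rw [← coeff_prod_toMvPolynomial (fun i => p i (σ i)) d, Units.smul_def, Units.smul_def,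
    coeff_smul]

/-- The formal Andréief identity: extracting the coefficient of `(∏ tᵢ) ^ N` plays the role of
integrating against a product measure. -/
theorem coeff_prod_mul_det_mul_det (w : R[X]) (f g : ι → R[X]) (N : ℕ) :
    coeff (Finsupp.equivFunOnFinite.symm fun _ => N)
      ((∏ i, w.toMvPolynomial i) *
        ((Matrix.of fun i j => (f j).toMvPolynomial i).det *
          (Matrix.of fun i j => (g j).toMvPolynomial i).det)) =
      (Fintype.card ι)! * (Matrix.of fun j k => (w * f j * g k).coeff N).det := by
  set M : Matrix ι ι R := Matrix.of fun j k => (w * f j * g k).coeff N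
  set G : Matrix ι ι (MvPolynomial ι R) := Matrix.of fun i j => (g j).toMvPolynomial i with hG
  have coeff_summand (σ : Equiv.Perm ι) :
      coeff (Finsupp.equivFunOnFinite.symm fun _ => N)
        ((∏ i, w.toMvPolynomial i) * ((∏ i, (f (σ i)).toMvPolynomial i) * G.det)) =
        Equiv.Perm.sign σ • M.det := by
    rw [← mul_assoc, ← Finset.prod_mul_distrib, ← Matrix.det_mul_column]
    simp_rw [hG, Matrix.of_apply, ← map_mul]
    rw [Units.smul_def, zsmul_eq_mul, ← Matrix.det_permute]
    exact coeff_det_toMvPolynomial (Matrix.of fun i j => w * f (σ i) * g j) _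
  rw [← Matrix.det_transpose, Matrix.det_apply, Finset.sum_mul, Finset.mul_sum, coeff_sum]
  simp_rw [Matrix.transpose_apply, Matrix.of_apply, smul_mul_assoc, Units.smul_def,
    mul_smul_comm, coeff_smul, coeff_summand, Units.smul_def, smul_smul, ← Units.val_mul,
    Int.units_mul_self]
  simp [Fintype.card_perm]

end Andreief

section SuperCatalan

variable (K : Type*) [Field K]

/-- The super Catalan number `(2p)! (2q)! / (p! q! (p + q)!)`, valued in a field so that the
factorials can be divided without an integrality argument. -/
noncomputable def superCatalan (p q : ℕ) : K :=
  ((2 * p)! / p ! : K) * ((2 * q)! / q ! : K) / (p + q)!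

variable {K} [CharZero K]

theorem factorial_two_mul_succ_div (p : ℕ) :
    ((2 * (p + 1))! / (p + 1)! : K) = (4 * p + 2) * ((2 * p)! / p !) := by
  have hp : (p + 1 : K) ≠ 0 := Nat.cast_add_one_ne_zero p
  have hp' : (p ! : K) ≠ 0 := mod_cast p.factorial_ne_zero
  rw [show 2 * (p + 1) = 2 * p + 1 + 1 by ring]
  simp only [Nat.factorial_succ]
  push_cast
  field_simp
  ring

theorem factorial_two_mul_add_div (p l : ℕ) :
    ((2 * (p + l))! / (p + l)! : K) =
      (2 * p)! / p ! * ∏ s ∈ Finset.range l, ((4 * p + 2 : K) + 4 * s) := by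
  induction l with
  | zero => simp
  | succ l ih =>
    rw [← add_assoc, factorial_two_mul_succ_div, ih, Finset.prod_range_succ]
    push_cast
    ring

theorem superCatalan_zero_left (q : ℕ) : superCatalan K 0 q = ((2 * q).choose q : K) := by
  rw [superCatalan, Nat.cast_choose K (by lia), show 2 * q - q = q by lia]
  simp [div_div]

theorem superCatalan_succ_add_superCatalan_succ (p q : ℕ) :
    superCatalan K (p + 1) q + superCatalan K p (q + 1) = 4 * superCatalan K p q := by
  have hpq : (p + q + 1 : K) ≠ 0 := mod_cast (p + q).succ_ne_zero
  have hpq' : ((p + q)! : K) ≠ 0 := mod_cast (p + q).factorial_ne_zero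
  rw [superCatalan, superCatalan, superCatalan, factorial_two_mul_succ_div,
    factorial_two_mul_succ_div, ← add_assoc, Nat.add_right_comm p 1 q, Nat.factorial_succ]
  push_cast
  field_simp
  ring

theorem coeff_pow_mul_pow_eq_superCatalan (p q : ℕ) :
    ((-(1 - Polynomial.X) ^ 2) ^ p * ((1 + Polynomial.X) ^ 2) ^ q : K[X]).coeff (p + q) =
      superCatalan K p q := by
  induction p generalizing q with
  | zero =>
    rw [superCatalan_zero_left, pow_zero, one_mul, zero_add, ← pow_mul,
      Polynomial.coeff_one_add_X_pow]
  | succ p ih =>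
    have split : ((-(1 - Polynomial.X) ^ 2) ^ (p + 1) * ((1 + Polynomial.X) ^ 2) ^ q : K[X]) =
        Polynomial.C 4 *
            ((-(1 - Polynomial.X) ^ 2) ^ p * ((1 + Polynomial.X) ^ 2) ^ q * Polynomial.X) -
          (-(1 - Polynomial.X) ^ 2) ^ p * ((1 + Polynomial.X) ^ 2) ^ (q + 1) := by
      rw [show (Polynomial.C 4 : K[X]) = 4 from rfl]
      ring
    rw [split, Polynomial.coeff_sub, Polynomial.coeff_C_mul, Nat.add_right_comm p 1 q,
      Polynomial.coeff_mul_X, ih, add_assoc p q 1, ih,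
      ← superCatalan_succ_add_superCatalan_succ, add_sub_cancel_right]

end SuperCatalan

section Determinants

variable {R : Type*} [CommRing R] {n : ℕ}

theorem det_prod_range_add (v : Fin n → R) (c : ℕ → R) :
    (Matrix.of fun i j : Fin n => ∏ s ∈ Finset.range j, (v i + c s)).det =
      (Matrix.vandermonde v).det := by
  nontriviality R
  rw [Matrix.det_eval_matrixOfPolynomials_eq_det_vandermonde v
    (fun j => ∏ s ∈ Finset.range j, (Polynomial.X - Polynomial.C (-c s)))
    (fun j => by simp only [Polynomial.natDegree_finsetProd_X_sub_C_eq_card, Finset.card_range])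
    (fun j => Polynomial.monic_prod_X_sub_C _ _)]
  simp [Polynomial.eval_prod]

theorem det_projVandermonde_mul_det_projVandermonde (t : Fin n → R) :
    (Matrix.projVandermonde (fun i => -(1 - t i) ^ 2) fun i => (1 + t i) ^ 2).det *
        (Matrix.projVandermonde (fun i => -(1 - t i) ^ 2) t).det =
      (∏ i : Fin n, ∏ _j ∈ Finset.Ioi i, 4) *
        ∏ i, ∏ j ∈ Finset.Ioi i, ((t i - t j) ^ 2 * (1 - t i * t j) ^ 2) := by
  simp only [Matrix.det_projVandermonde, ← Finset.prod_mul_distrib]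
  refine Finset.prod_congr rfl fun i _ => Finset.prod_congr rfl fun j _ => ?_
  ring

variable {K : Type*} [Field K] [CharZero K]

theorem det_factorial_two_mul_add_div (a m : ℕ) :
    (Matrix.of fun k l : Fin (m + 1) => ((2 * (a + k + l))! / (a + k + l)! : K)).det =
      (∏ k : Fin (m + 1), ((2 * (a + k))! / (a + k)! : K)) *
        ((∏ i : Fin (m + 1), ∏ _j ∈ Finset.Ioi i, 4) * m.superFactorial) := by
  calc
    _ = (Matrix.of fun k l : Fin (m + 1) => ((2 * (a + k))! / (a + k)! : K) *
          ∏ s ∈ Finset.range (l : ℕ), ((4 * (a + k : ℕ) + 2 : K) + 4 * s)).det :=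
      congrArg (fun M => (Matrix.of M).det) <| funext fun k => funext fun l =>
        factorial_two_mul_add_div (a + k) l
    _ = (∏ k : Fin (m + 1), ((2 * (a + k))! / (a + k)! : K)) *
          (Matrix.of fun k l : Fin (m + 1) =>
            ∏ s ∈ Finset.range (l : ℕ), ((4 * (a + k : ℕ) + 2 : K) + 4 * s)).det :=
      Matrix.det_mul_column _ _
    _ = _ := by
      rw [det_prod_range_add, Matrix.det_vandermonde,
        ← Matrix.det_vandermonde_id_eq_superFactorial, Matrix.det_vandermonde]
      congr 1
      simp only [← Finset.prod_mul_distrib]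
      refine Finset.prod_congr rfl fun i _ => Finset.prod_congr rfl fun j _ => ?_
      push_cast
      ring

theorem det_superCatalan (a b m : ℕ) :
    (Matrix.of fun k l : Fin (m + 1) => superCatalan K (a + k + l) (b + k.rev)).det =
      (∏ i : Fin (m + 1), ∏ _j ∈ Finset.Ioi i, 4) * m.superFactorial *
        ∏ k : Fin (m + 1), (((2 * (a + k))! / (a + k)! : K) * ((2 * (b + k))! / (b + k)! : K) /
          (a + b + m + k)!) := by
  have entry (k l : Fin (m + 1)) : superCatalan K (a + k + l) (b + k.rev) =
      ((2 * (b + k.rev))! / (b + k.rev)! : K) *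
        (((a + b + m + l)! : K)⁻¹ * ((2 * (a + k + l))! / (a + k + l)! : K)) := by
    rw [superCatalan, show a + k + l + (b + k.rev) = a + b + m + l by
      rw [Fin.val_rev]; lia]
    ring
  have reverse : ∏ k : Fin (m + 1), ((2 * (b + k.rev))! / (b + k.rev)! : K) =
      ∏ k : Fin (m + 1), ((2 * (b + k))! / (b + k)! : K) :=
    Equiv.prod_comp Fin.revPerm fun k : Fin (m + 1) => ((2 * (b + k))! / (b + k)! : K)
  calc
    _ = (∏ k : Fin (m + 1), ((2 * (b + k.rev))! / (b + k.rev)! : K)) *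
          ((∏ l : Fin (m + 1), ((a + b + m + l)! : K)⁻¹) *
            (Matrix.of fun k l : Fin (m + 1) => ((2 * (a + k + l))! / (a + k + l)! : K)).det) := by
      simp_rw [entry]
      rw [← Matrix.det_mul_row]
      exact Matrix.det_mul_column _ _
    _ = _ := by
      rw [det_factorial_two_mul_add_div, reverse]
      simp only [div_eq_mul_inv, Finset.prod_mul_distrib]
      ring

end Determinants

section ConstantTerm

variable {K : Type*} [Field K] [CharZero K]

theorem coeff_mixed_basis_eq_superCatalan (A b m : ℕ) (k l : Fin (m + 1)) :
    ((-(1 - Polynomial.X) ^ 2) ^ A * ((1 + Polynomial.X) ^ 2) ^ b *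
        ((-(1 - Polynomial.X) ^ 2) ^ (k : ℕ) * ((1 + Polynomial.X) ^ 2) ^ (k.rev : ℕ)) *
        ((-(1 - Polynomial.X) ^ 2) ^ (l : ℕ) * Polynomial.X ^ (l.rev : ℕ)) :
      K[X]).coeff (A + b + 2 * m) = superCatalan K (A + k + l) (b + k.rev) := by
  have exponent : A + b + 2 * m = A + k + l + (b + k.rev) + l.rev := by
    rw [Fin.val_rev, Fin.val_rev]
    lia
  rw [exponent, ← coeff_pow_mul_pow_eq_superCatalan, ← mul_assoc, Polynomial.coeff_mul_X_pow]
  congr 1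
  ring

theorem prod_four_mul_coeff_eq_det_superCatalan (A b m : ℕ) :
    (∏ i : Fin (m + 1), ∏ _j ∈ Finset.Ioi i, 4) *
      coeff (Finsupp.equivFunOnFinite.symm fun _ : Fin (m + 1) => A + b + 2 * m)
        ((∏ i, ((-(1 - X i) ^ 2) ^ A * ((1 + X i) ^ 2) ^ b)) *
          ∏ i, ∏ j ∈ Finset.Ioi i, ((X i - X j) ^ 2 * (1 - X i * X j) ^ 2) :
            MvPolynomial (Fin (m + 1)) K) =
      (m + 1)! *
        (Matrix.of fun k l : Fin (m + 1) => superCatalan K (A + k + l) (b + k.rev)).det := by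
  have andreief := coeff_prod_mul_det_mul_det
    ((-(1 - Polynomial.X) ^ 2) ^ A * ((1 + Polynomial.X) ^ 2) ^ b : K[X])
    (fun k : Fin (m + 1) =>
      (-(1 - Polynomial.X) ^ 2) ^ (k : ℕ) * ((1 + Polynomial.X) ^ 2) ^ (k.rev : ℕ))
    (fun l : Fin (m + 1) => (-(1 - Polynomial.X) ^ 2) ^ (l : ℕ) * Polynomial.X ^ (l.rev : ℕ))
    (A + b + 2 * m)
  have det_mul_det := det_projVandermonde_mul_det_projVandermonde
    fun i : Fin (m + 1) => (X i : MvPolynomial (Fin (m + 1)) K)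
  simp only [coeff_mixed_basis_eq_superCatalan, Fintype.card_fin, map_mul, map_pow, map_neg,
    map_sub, map_add, map_one, Polynomial.toMvPolynomial_X] at andreief
  rw [← andreief, ← coeff_C_mul, mul_left_comm]
  simp only [map_prod, map_ofNat]
  rw [← det_mul_det]
  rfl

theorem coeff_eq_superFactorial_mul_prod (A b m : ℕ) :
    coeff (Finsupp.equivFunOnFinite.symm fun _ : Fin (m + 1) => A + b + 2 * m)
      ((∏ i, ((-(1 - X i) ^ 2) ^ A * ((1 + X i) ^ 2) ^ b)) *
        ∏ i, ∏ j ∈ Finset.Ioi i, ((X i - X j) ^ 2 * (1 - X i * X j) ^ 2) :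
          MvPolynomial (Fin (m + 1)) K) =
      (m + 1).superFactorial *
        ∏ k : Fin (m + 1), (((2 * (A + k))! / (A + k)! : K) * ((2 * (b + k))! / (b + k)! : K) /
          (A + b + m + k)!) := by
  have prod_four_ne_zero : (∏ i : Fin (m + 1), ∏ _j ∈ Finset.Ioi i, 4 : K) ≠ 0 := by
    simp [Finset.prod_ne_zero_iff]
  apply mul_left_cancel₀ prod_four_ne_zero
  rw [prod_four_mul_coeff_eq_det_superCatalan, det_superCatalan, Nat.superFactorial_succ]
  push_cast
  ring

theorem macdonald_BCn_special_general (A b n : ℕ) :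
    coeff (Finsupp.equivFunOnFinite.symm fun _ : Fin n => A + b + 2 * n - 2)
      ((∏ i : Fin n, ((1 - X i) ^ (2 * A) * (1 + X i) ^ (2 * b))) *
        ∏ i : Fin n, ∏ j ∈ Finset.Ioi i,
          ((X i - X j) ^ 2 * (1 - X i * X j) ^ 2) : MvPolynomial (Fin n) K) =
    (-1) ^ (n * A) *
      ∏ i ∈ Finset.Icc 1 n,
        ((2 * b + 2 * i - 2)! * (2 * A + 2 * i - 2)! * i ! : K) /
          ((b + i - 1)! * (A + i - 1)! * (A + b + n + i - 2)! : K) := by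
  rcases n with _ | m
  · rw [Subsingleton.elim (Finsupp.equivFunOnFinite.symm _) 0]
    simp
  have weight : (∏ i, ((1 - X i) ^ (2 * A) * (1 + X i) ^ (2 * b)) :
      MvPolynomial (Fin (m + 1)) K) =
      C ((-1) ^ ((m + 1) * A)) * ∏ i, ((-(1 - X i) ^ 2) ^ A * ((1 + X i) ^ 2) ^ b) := by
    have weight_apply (i : Fin (m + 1)) :
        ((1 - X i) ^ (2 * A) * (1 + X i) ^ (2 * b) : MvPolynomial (Fin (m + 1)) K) =
          C ((-1) ^ A) * ((-(1 - X i) ^ 2) ^ A * ((1 + X i) ^ 2) ^ b) := by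
      rw [map_pow, map_neg, map_one, ← mul_assoc, ← mul_pow, neg_one_mul, neg_neg, ← pow_mul,
        ← pow_mul]
    rw [Finset.prod_congr rfl fun i _ => weight_apply i, Finset.prod_mul_distrib]
    simp [← pow_mul, mul_comm A]
  rw [weight, mul_assoc, coeff_C_mul, show A + b + 2 * (m + 1) - 2 = A + b + 2 * m by lia,
    coeff_eq_superFactorial_mul_prod, ← Nat.prod_range_factorial_succ, Nat.cast_prod,
    Finset.prod_range, ← Finset.prod_mul_distrib, ← Finset.Ico_add_one_right_eq_Icc,
    Finset.prod_Ico_eq_prod_range, Finset.prod_range]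
  congr 1
  refine Finset.prod_congr rfl fun k _ => ?_
  rw [show 2 * b + 2 * (1 + (k : ℕ)) - 2 = 2 * (b + k) by lia,
    show 2 * A + 2 * (1 + (k : ℕ)) - 2 = 2 * (A + k) by lia,
    show b + (1 + (k : ℕ)) - 1 = b + k by lia, show A + (1 + (k : ℕ)) - 1 = A + k by lia,
    show A + b + (m + 1) + (1 + (k : ℕ)) - 2 = A + b + m + k by lia, add_comm 1 (k : ℕ)]
  ring

end ConstantTerm

theorem macdonald_BCn_special (α β n : ℕ) :
    MvPolynomial.coeff
      (Finsupp.equivFunOnFinite.symm fun _ : Fin n => α + 2 * β + 2 * n - 2)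
      ((∏ i : Fin n, ((1 - X i) ^ (2 * α) * (1 - X i ^ 2) ^ (2 * β))) *
        ∏ i : Fin n, ∏ j ∈ Finset.Ioi i,
          ((X i - X j) ^ 2 * (1 - X i * X j) ^ 2) : MvPolynomial (Fin n) ℚ) =
    (-1 : ℚ) ^ (n * (α + β)) *
      ∏ i ∈ Finset.Icc 1 n,
        (((2 * β + 2 * i - 2).factorial * (2 * α + 2 * β + 2 * i - 2).factorial *
          i.factorial : ℚ)) /
        (((β + i - 1).factorial * (α + β + i - 1).factorial *
          (α + 2 * β + n + i - 2).factorial : ℚ)) := by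
  have weight (i : Fin n) : ((1 - X i) ^ (2 * α) * (1 - X i ^ 2) ^ (2 * β) :
      MvPolynomial (Fin n) ℚ) = (1 - X i) ^ (2 * (α + β)) * (1 + X i) ^ (2 * β) := by
    rw [show (1 - X i ^ 2 : MvPolynomial (Fin n) ℚ) = (1 - X i) * (1 + X i) by ring, mul_pow]
    ring
  simp_rw [weight, two_mul β, ← add_assoc α β β, ← two_mul β, ← mul_add 2 α β]
  exact macdonald_BCn_special_general (α + β) β n
end
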